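/- arXiv:math/0411312 — 2 statements merged into one kernel-verified Lean document; each statement's English description precedes it below -/
import Mathlib

section
/- Let T₁, T₂, T₃ be unit vectors in ℝ³ making equal pairwise angles, with common spherical circumradius β ∈ [0, π/2] (the spherical distance from each Tℓ to the closer center N). Then tc := sup_e Σℓ(π/2 − d_{S²}(e,Tℓ)) equals 3(π/2 − β) if β ≤ R₀, and equals 3π/2 − 4·arcsin((√3/2)·sin β) if β ≥ R₀, where R₀ is the unique value in (0, π/2) at which 3β = 4·arcsin((√3/2)·sin β). -/
open Real RealInnerProductSpace

/-- The vertex total-curvature contribution of three unit vectors in `ℝ³`. -/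
noncomputable def tcVertex3 (T : Fin 3 → EuclideanSpace ℝ (Fin 3)) : ℝ :=
  sSup {s : ℝ | ∃ e : EuclideanSpace ℝ (Fin 3), ‖e‖ = 1 ∧
    s = ∑ ℓ, (π / 2 - Real.arccos ⟪T ℓ, e⟫)}

/-!
Rotate `e` about `N` onto the meridian through a vertex, at constant distance `θ` from `N`. The sum
and the sum of squares of the three inner products `⟪T ℓ, e⟫` do not change. Three numbers with
prescribed first two power sums maximize the sum of a function with convex derivative, such as
`arcsin`, when the two smaller ones coincide, which is what happens on the meridian.

On the meridian it suffices to go up to `θ = β`, where `e` is a vertex. As long as the two symmetric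
vertices are at distance at most `π / 2` from `e`, the value at `N` is larger; from there on the
distances to them are concave in `θ`, so the sum is convex. Hence the supremum is the larger of the
values at `N` and at a vertex, and concavity of `arcsin (√3 / 2 * sin β)` in `β` tells which one.
-/

open Set

section PowerSums

variable {f f' : ℝ → ℝ} {l a b x y z : ℝ}

/-- `r'` vanishes at `a` and, by Rolle, at some `c ∈ (a, b)`; convexity then forces it to be
nonnegative to the left of `a`, nonpositive on `[a, c]` and nonnegative to the right of `c`. -/
lemma nonpos_of_convexOn_hasDerivAt {r r' : ℝ → ℝ} (hr : ContinuousOn r (Icc l b))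
    (hr' : ∀ t ∈ Ioo l b, HasDerivAt r (r' t) t) (hconv : ConvexOn ℝ (Ioo l b) r')
    (ha : a ∈ Ioo l b) (hra : r a = 0) (hra' : r' a = 0) (hrb : r b = 0) (hx : x ∈ Icc l b) :
    r x ≤ 0 := by
  obtain ⟨c, ⟨hac, hcb⟩, hc⟩ := exists_hasDerivAt_eq_zero ha.2
    (hr.mono (Icc_subset_Icc_left ha.1.le)) (hra.trans hrb.symm)
    fun t ht => hr' t ⟨ha.1.trans ht.1, ht.2⟩
  have hcmem : c ∈ Ioo l b := ⟨ha.1.trans hac, hcb⟩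
  have hderiv {s t : ℝ} (hs : l ≤ s) (ht : t ≤ b) :
      ∀ p ∈ interior (Icc s t), HasDerivWithinAt r (r' p) (interior (Icc s t)) p := by
    rw [interior_Icc]
    exact fun p hp => (hr' p ⟨hs.trans_lt hp.1, hp.2.trans_le ht⟩).hasDerivWithinAt
  have hleft : MonotoneOn r (Icc l a) :=
    monotoneOn_of_hasDerivWithinAt_nonneg (convex_Icc l a)
      (hr.mono (Icc_subset_Icc_right ha.2.le)) (hderiv le_rfl ha.2.le) fun t ht => by
        rw [interior_Icc] at ht
        exact hra'.ge.trans <| hconv.le_left_of_right_le'' ⟨ht.1, ht.2.trans ha.2⟩ hcmem ht.2.le hac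
          (hc.trans hra'.symm).le
  have hmiddle : AntitoneOn r (Icc a c) :=
    antitoneOn_of_hasDerivWithinAt_nonpos (convex_Icc a c)
      (hr.mono (Icc_subset_Icc ha.1.le hcb.le)) (hderiv ha.1.le hcb.le) fun t ht => by
        simpa only [hra', hc, max_self] using
          hconv.le_max_of_mem_Icc ha hcmem (interior_subset ht)
  have hright : MonotoneOn r (Icc c b) :=
    monotoneOn_of_hasDerivWithinAt_nonneg (convex_Icc c b)
      (hr.mono (Icc_subset_Icc_left hcmem.1.le)) (hderiv hcmem.1.le le_rfl) fun t ht => by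
        rw [interior_Icc] at ht
        exact hc.ge.trans <| hconv.le_right_of_left_le'' ha ⟨hcmem.1.trans ht.1, ht.2⟩ hac ht.1.le
          (hra'.trans hc.symm).le
  rcases le_total x a with hxa | hax
  · exact (hleft ⟨hx.1, hxa⟩ ⟨ha.1.le, le_rfl⟩ hxa).trans_eq hra
  rcases le_total x c with hxc | hcx
  · exact (hmiddle ⟨le_rfl, hac.le⟩ ⟨hax, hxc⟩ hax).trans_eq hra
  · exact (hright ⟨hcx, hx.2⟩ ⟨hcb.le, le_rfl⟩ hx.2).trans_eq hrb

lemma taylor_remainder_mul_sq_le_of_convexOn_hasDerivAt (hf : ContinuousOn f (Icc l b))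
    (hf' : ∀ t ∈ Ioo l b, HasDerivAt f (f' t) t) (hconv : ConvexOn ℝ (Ioo l b) f')
    (ha : a ∈ Ioo l b) (hx : x ∈ Icc l b) :
    (f x - f a - f' a * (x - a)) * (b - a) ^ 2 ≤
      (f b - f a - f' a * (b - a)) * (x - a) ^ 2 := by
  have hab : 0 < b - a := sub_pos.2 ha.2
  set k := (f b - f a - f' a * (b - a)) / (b - a) ^ 2 with hk
  have hkb : k * (b - a) ^ 2 = f b - f a - f' a * (b - a) := by rw [hk]; field_simp
  have haffine : ConvexOn ℝ (Ioo l b) fun t => -(f' a + 2 * k * (t - a)) :=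
    ⟨convex_Ioo l b, fun s _ t _ p q _ _ hpq => le_of_eq <| by
      simp only [smul_eq_mul]; linear_combination (f' a - 2 * k * a) * hpq⟩
  have hremainder : f x - f a - f' a * (x - a) - k * (x - a) ^ 2 ≤ 0 :=
    nonpos_of_convexOn_hasDerivAt (r := fun t => f t - f a - f' a * (t - a) - k * (t - a) ^ 2)
      (by fun_prop)
      (fun t ht => by
        have hid := (hasDerivAt_id t).sub_const a
        exact ((((hf' t ht).sub_const _).sub (hid.const_mul _)).sub
          ((hid.pow 2).const_mul k)).congr_deriv (by simp; ring))
      (hconv.add haffine) ha (by ring) (by simp) (by rw [hkb]; ring) hx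
  calc (f x - f a - f' a * (x - a)) * (b - a) ^ 2
      ≤ k * (x - a) ^ 2 * (b - a) ^ 2 := by gcongr; linarith
    _ = (f b - f a - f' a * (b - a)) * (x - a) ^ 2 := by rw [← hkb]; ring

lemma mem_Icc_of_sum_of_sum_sq (hab : a ≤ b) (hsum : x + y + z = b + 2 * a)
    (hsq : x ^ 2 + y ^ 2 + z ^ 2 = b ^ 2 + 2 * a ^ 2) : x ∈ Icc (a - (b - a) / 3) b := by
  have hfactor : 0 ≤ (b - x) * (x - (a - (b - a) / 3)) := by
    have h : (y + z) ^ 2 ≤ 2 * (y ^ 2 + z ^ 2) := add_sq_le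
    rw [show y + z = b + 2 * a - x by linarith,
      show y ^ 2 + z ^ 2 = b ^ 2 + 2 * a ^ 2 - x ^ 2 by linarith] at h
    linarith
  constructor <;> by_contra! h <;> nlinarith

/-- With the first two power sums fixed, only the second-order Taylor remainder at `a` matters,
and its quotient by `(t - a) ^ 2` is largest at `b`. -/
lemma add_add_le_of_sum_of_sum_sq (hf : ContinuousOn f (Icc l b))
    (hf' : ∀ t ∈ Ioo l b, HasDerivAt f (f' t) t) (hconv : ConvexOn ℝ (Ioo l b) f')
    (hab : a ≤ b) (hl : l ≤ a - (b - a) / 3) (hsum : x + y + z = b + 2 * a)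
    (hsq : x ^ 2 + y ^ 2 + z ^ 2 = b ^ 2 + 2 * a ^ 2) : f x + f y + f z ≤ f b + 2 * f a := by
  have hx := mem_Icc_of_sum_of_sum_sq hab hsum hsq
  have hy := mem_Icc_of_sum_of_sum_sq (x := y) (y := x) (z := z) hab (by linarith) (by linarith)
  have hz := mem_Icc_of_sum_of_sum_sq (x := z) (y := x) (z := y) hab (by linarith) (by linarith)
  rcases hab.eq_or_lt with rfl | hab
  · simp only [sub_self, zero_div, sub_zero, Icc_self, mem_singleton_iff] at hx hy hz
    rw [hx, hy, hz]
    linarith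
  have hremainder {t : ℝ} (ht : t ∈ Icc (a - (b - a) / 3) b) :=
    taylor_remainder_mul_sq_le_of_convexOn_hasDerivAt hf hf' hconv
      (a := a) ⟨by linarith, hab⟩ (Icc_subset_Icc_left hl ht)
  have hsq_sub : (x - a) ^ 2 + (y - a) ^ 2 + (z - a) ^ 2 = (b - a) ^ 2 := by
    linear_combination hsq - 2 * a * hsum
  refine le_of_mul_le_mul_right ?_ (pow_pos (sub_pos.2 hab) 2)
  linear_combination hremainder hx + hremainder hy + hremainder hz +
    (f b - f a - f' a * (b - a)) * hsq_sub + (f' a * (b - a) ^ 2) * hsum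

end PowerSums

section Arcsin

lemma convexOn_one_div_of_concaveOn {E : Type*} [AddCommGroup E] [Module ℝ E] {s : Set E}
    {f : E → ℝ} (hf : ConcaveOn ℝ s f) (hpos : ∀ x ∈ s, 0 < f x) :
    ConvexOn ℝ s fun x => 1 / f x := by
  refine ⟨hf.1, fun x hx y hy p q hp hq hpq => ?_⟩
  have hinv := (convexOn_zpow (𝕜 := ℝ) (-1)).2 (hpos x hx) (hpos y hy) hp hq hpq
  simp only [zpow_neg_one, ← one_div] at hinv
  exact (one_div_le_one_div_of_le (convex_Ioi 0 (hpos x hx) (hpos y hy) hp hq hpq)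
    (hf.2 hx hy hp hq hpq)).trans hinv

lemma concaveOn_sqrt_of_concaveOn {E : Type*} [AddCommGroup E] [Module ℝ E] {s : Set E}
    {f : E → ℝ} (hf : ConcaveOn ℝ s f) (hnonneg : ∀ x ∈ s, 0 ≤ f x) :
    ConcaveOn ℝ s fun x => √(f x) :=
  ⟨hf.1, fun _ hx _ hy _ _ hp hq hpq =>
    (strictConcaveOn_sqrt.concaveOn.2 (hnonneg _ hx) (hnonneg _ hy) hp hq hpq).trans
      (sqrt_le_sqrt (hf.2 hx hy hp hq hpq))⟩

lemma convexOn_one_div_sqrt_one_sub_sq :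
    ConvexOn ℝ (Ioo (-1) 1) fun x : ℝ => 1 / √(1 - x ^ 2) := by
  have hpos : ∀ x ∈ Ioo (-1 : ℝ) 1, 0 < 1 - x ^ 2 := fun x hx => by nlinarith [hx.1, hx.2]
  have hconcave : ConcaveOn ℝ (Ioo (-1 : ℝ) 1) fun x => 1 - x ^ 2 :=
    (concaveOn_const 1 (convex_Ioo _ _)).sub
      (even_two.convexOn_pow.subset (subset_univ _) (convex_Ioo _ _))
  exact convexOn_one_div_of_concaveOn
    (concaveOn_sqrt_of_concaveOn hconcave fun x hx => (hpos x hx).le)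
    fun x hx => sqrt_pos.2 (hpos x hx)

lemma arcsin_add_add_le_of_sum_of_sum_sq {a b x y z : ℝ} (hab : a ≤ b) (hb : b ≤ 1)
    (hl : -1 ≤ a - (b - a) / 3) (hsum : x + y + z = b + 2 * a)
    (hsq : x ^ 2 + y ^ 2 + z ^ 2 = b ^ 2 + 2 * a ^ 2) :
    arcsin x + arcsin y + arcsin z ≤ arcsin b + 2 * arcsin a :=
  add_add_le_of_sum_of_sum_sq continuous_arcsin.continuousOn
    (fun _ ht => hasDerivAt_arcsin ht.1.ne' (ht.2.trans_le hb).ne)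
    (convexOn_one_div_sqrt_one_sub_sq.subset (Ioo_subset_Ioo_right hb) (convex_Ioo _ _))
    hab hl hsum hsq

/-- Geometrically: along a great circle, the spherical distance to a point off that circle is
concave outside the open hemisphere around the point. -/
lemma convexOn_arcsin_mul_cos_add_mul_sin {a b : ℝ} (hab : a ^ 2 + b ^ 2 < 1) {s : Set ℝ}
    (hs : Convex ℝ s) (hnonpos : ∀ x ∈ s, a * cos x + b * sin x ≤ 0) :
    ConvexOn ℝ s fun x => arcsin (a * cos x + b * sin x) := by
  set q : ℝ → ℝ := fun x => a * cos x + b * sin x with hq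
  set q' : ℝ → ℝ := fun x => b * cos x - a * sin x with hq'
  have hpyth (x : ℝ) : q x ^ 2 + q' x ^ 2 = a ^ 2 + b ^ 2 := by
    linear_combination (a ^ 2 + b ^ 2) * sin_sq_add_cos_sq x
  have hlt (x : ℝ) : 0 < 1 - q x ^ 2 := by nlinarith [hpyth x, sq_nonneg (q' x)]
  have hderiv (x : ℝ) : HasDerivAt q (q' x) x :=
    (((hasDerivAt_cos x).const_mul a).add ((hasDerivAt_sin x).const_mul b)).congr_deriv (by
      simp only [hq']; ring)
  have hderiv' (x : ℝ) : HasDerivAt q' (-q x) x :=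
    (((hasDerivAt_cos x).const_mul b).sub ((hasDerivAt_sin x).const_mul a)).congr_deriv (by
      simp only [hq]; ring)
  refine convexOn_of_hasDerivWithinAt2_nonneg hs (f' := fun x => q' x / √(1 - q x ^ 2))
    (f'' := fun x => -q x * (1 - (a ^ 2 + b ^ 2)) / √(1 - q x ^ 2) ^ 3) (by fun_prop)
    (fun x _ => ?_) (fun x _ => ?_) fun x hx => ?_
  · have habs := abs_lt.1 ((sq_lt_one_iff_abs_lt_one _).1 (sub_pos.1 (hlt x)))
    exact (((hasDerivAt_arcsin habs.1.ne' habs.2.ne).comp x (hderiv x)).congr_deriv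
      (by ring)).hasDerivWithinAt
  · have hsqrt : √(1 - q x ^ 2) ≠ 0 := (sqrt_pos.2 (hlt x)).ne'
    have hsq : √(1 - q x ^ 2) ^ 2 = 1 - q x ^ 2 := sq_sqrt (hlt x).le
    refine ((hderiv' x).div (((hderiv x).pow 2).const_sub 1 |>.sqrt (hlt x).ne')
      hsqrt).congr_deriv ?_ |>.hasDerivWithinAt
    simp only [Pi.pow_apply]
    field_simp
    simp only [hsq]
    linear_combination 2 * q x * hpyth x
  · exact div_nonneg (mul_nonneg (neg_nonneg.2 (hnonpos x (interior_subset hx)))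
      (sub_nonneg.2 hab.le)) (by positivity)

lemma concaveOn_arcsin_mul_sin {k : ℝ} (hk₀ : 0 ≤ k) (hk₁ : k < 1) :
    ConcaveOn ℝ (Icc 0 π) fun x => arcsin (k * sin x) := by
  have h := convexOn_arcsin_mul_cos_add_mul_sin (a := 0) (b := -k) (by nlinarith)
    (convex_Icc 0 π) fun x hx => by nlinarith [mul_nonneg hk₀ (sin_nonneg_of_mem_Icc hx)]
  simpa [Pi.neg_def] using h.neg

lemma arcsin_cos {x : ℝ} (h₀ : 0 ≤ x) (h₁ : x ≤ π) : arcsin (cos x) = π / 2 - x := by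
  rw [arcsin_eq_pi_div_two_sub_arccos, arccos_cos h₀ h₁]

end Arcsin

section Meridian

variable {β θ : ℝ}

/-- The value of `∑ ℓ, (π / 2 - d(e, Tℓ))` at the point `e` at distance `θ` from the circumcenter
`N`, on the meridian from `N` through the vertex `T 0`. The last two vertices are symmetric with
respect to this meridian, whence the factor `2`. -/
noncomputable def meridianSum (β θ : ℝ) : ℝ :=
  arcsin (cos (θ - β)) + 2 * arcsin (cos β * cos θ - sin β * sin θ / 2)

lemma meridianSum_zero (hβ : β ∈ Icc 0 π) : meridianSum β 0 = 3 * (π / 2 - β) := by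
  simp only [meridianSum, zero_sub, cos_neg, cos_zero, sin_zero, mul_one, mul_zero, zero_div,
    sub_zero, arcsin_cos hβ.1 hβ.2]
  ring

lemma meridianSum_self (hβ : β ∈ Icc 0 π) :
    meridianSum β β = 3 * π / 2 - 4 * arcsin (√3 / 2 * sin β) := by
  have hsin : 0 ≤ sin β := sin_nonneg_of_mem_Icc hβ
  have hsqrt : √3 ^ 2 = 3 := sq_sqrt (by norm_num)
  have hle : √3 / 2 * sin β ≤ 1 := by nlinarith [sin_le_one β, sqrt_nonneg 3]
  set s := arcsin (√3 / 2 * sin β)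
  have hs₀ : 0 ≤ s := arcsin_nonneg.2 (by positivity)
  have hs₁ : s ≤ π / 2 := arcsin_le_pi_div_two _
  have hsin_s : sin s = √3 / 2 * sin β :=
    sin_arcsin (by linarith [show 0 ≤ √3 / 2 * sin β by positivity]) hle
  have hside : cos β * cos β - sin β * sin β / 2 = cos (2 * s) := by
    rw [cos_two_mul, cos_sq', hsin_s]
    linear_combination sin_sq_add_cos_sq β + sin β ^ 2 / 2 * hsqrt
  rw [meridianSum, hside, sub_self, cos_zero, arcsin_one,
    arcsin_cos (by linarith) (by linarith)]
  ring

lemma meridianSum_eq_of_le (hβ : β ≤ π) (h₀ : 0 ≤ θ) (hθ : θ ≤ β) :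
    meridianSum β θ = π / 2 - β + θ + 2 * arcsin (cos β * cos θ - sin β * sin θ / 2) := by
  rw [meridianSum, ← neg_sub, cos_neg, arcsin_cos (by linarith) (by linarith)]
  ring

/-- With `t = θ / 2` and `q` the argument of the last arcsine, the claim is `q ≤ cos (β + t)`;
dividing by `1 - cos t` turns it into `sin β * sin t ≤ cos β * (2 * cos t + 1)`. -/
lemma meridianSum_le_meridianSum_zero (hβ : β ≤ π / 2) (h₀ : 0 ≤ θ) (hθ : θ ≤ β)
    (hq : 0 ≤ cos β * cos θ - sin β * sin θ / 2) : meridianSum β θ ≤ meridianSum β 0 := by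
  obtain ⟨t, rfl⟩ : ∃ t, θ = 2 * t := ⟨θ / 2, by ring⟩
  have hcosβ : 0 ≤ cos β := cos_nonneg_of_neg_pi_div_two_le_of_le (by linarith) hβ
  have hcost : 0 < cos t := cos_pos_of_mem_Ioo ⟨by linarith [pi_pos], by linarith [pi_pos]⟩
  have hcos₂ : cos (2 * t) ≤ cos t := cos_le_cos_of_nonneg_of_le_pi (by linarith) (by linarith)
    (by linarith)
  have hkey : sin β * sin t ≤ cos β * (2 * cos t + 1) := by
    refine le_of_mul_le_mul_right ?_ hcost
    calc sin β * sin t * cos t ≤ cos β * cos (2 * t) := by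
          rw [sin_two_mul] at hq; linarith
      _ ≤ cos β * cos t := by gcongr
      _ ≤ cos β * (2 * cos t + 1) * cos t := by nlinarith [mul_nonneg hcosβ hcost.le]
  have hle : cos β * cos (2 * t) - sin β * sin (2 * t) / 2 ≤ cos (β + t) := by
    rw [cos_two_mul, sin_two_mul, cos_add]
    nlinarith [mul_le_mul_of_nonneg_left hkey (sub_nonneg.2 (cos_le_one t))]
  have harcsin := monotone_arcsin hle
  rw [arcsin_cos (by linarith) (by linarith)] at harcsin
  rw [meridianSum_eq_of_le (by linarith) h₀ hθ, meridianSum_zero ⟨by linarith, by linarith⟩]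
  linarith

lemma antitoneOn_cos_mul_cos_sub_sin_mul_sin_div_two (hβ : β ∈ Icc 0 (π / 2)) :
    AntitoneOn (fun θ => cos β * cos θ - sin β * sin θ / 2) (Icc 0 (π / 2)) := by
  intro x hx y hy hxy
  have hsin : sin x ≤ sin y :=
    sin_le_sin_of_le_of_le_pi_div_two (by linarith [hx.1, pi_pos]) hy.2 hxy
  have hcos : cos y ≤ cos x :=
    cos_le_cos_of_nonneg_of_le_pi hx.1 (by linarith [hy.2, pi_pos]) hxy
  have hsinβ : 0 ≤ sin β := sin_nonneg_of_mem_Icc ⟨hβ.1, by linarith [hβ.2, pi_pos]⟩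
  have hcosβ : 0 ≤ cos β :=
    cos_nonneg_of_neg_pi_div_two_le_of_le (by linarith [hβ.1, pi_pos]) hβ.2
  dsimp only
  gcongr

lemma meridianSum_le_meridianSum_self (hβ : 0 ≤ β) (hθ : β ≤ θ) (h₁ : θ ≤ π / 2) :
    meridianSum β θ ≤ meridianSum β β := by
  have hle := antitoneOn_cos_mul_cos_sub_sin_mul_sin_div_two ⟨hβ, hθ.trans h₁⟩
    ⟨hβ, hθ.trans h₁⟩ ⟨hβ.trans hθ, h₁⟩ hθ
  unfold meridianSum
  gcongr
  simpa using cos_le_one _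

/-- The last arcsine of `meridianSum` changes sign at some `c ≤ θ`, and `meridianSum β` is convex on
`[c, β]`, where that arcsine is nonpositive. -/
lemma meridianSum_le_max_of_neg (hβ : β ≤ π / 2) (h₀ : 0 ≤ θ) (hθ : θ ≤ β)
    (hq : cos β * cos θ - sin β * sin θ / 2 < 0) :
    meridianSum β θ ≤ max (meridianSum β 0) (meridianSum β β) := by
  set q : ℝ → ℝ := fun x => cos β * cos x - sin β * sin x / 2 with hq_def
  have hβmem : β ∈ Icc 0 (π / 2) := ⟨h₀.trans hθ, hβ⟩
  have hcosβ : 0 ≤ cos β := cos_nonneg_of_neg_pi_div_two_le_of_le (by linarith [hβmem.1]) hβ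
  have hcosθ : 0 ≤ cos θ := cos_nonneg_of_neg_pi_div_two_le_of_le (by linarith) (by linarith)
  have hsinβ : sin β ≠ 0 := fun h => by
    rw [h] at hq
    linarith [mul_nonneg hcosβ hcosθ]
  obtain ⟨c, hc, hqc⟩ : ∃ c ∈ Icc 0 θ, q c = 0 :=
    intermediate_value_Icc' h₀ (by fun_prop) ⟨hq.le, by simpa [hq_def] using hcosβ⟩
  have hnonpos : ∀ x ∈ Icc c β, q x ≤ 0 := fun x hx =>
    (antitoneOn_cos_mul_cos_sub_sin_mul_sin_div_two hβmem ⟨hc.1, by linarith [hc.2]⟩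
      ⟨hc.1.trans hx.1, hx.2.trans hβ⟩ hx.1).trans_eq hqc
  have hq_eq (x : ℝ) : q x = cos β * cos x + -sin β / 2 * sin x := by ring
  have harcsin : ConvexOn ℝ (Icc c β) fun x => arcsin (q x) := by
    simp only [hq_eq] at hnonpos ⊢
    refine convexOn_arcsin_mul_cos_add_mul_sin ?_ (convex_Icc c β) hnonpos
    nlinarith [sin_sq_add_cos_sq β, sq_pos_of_ne_zero hsinβ]
  have hconvex : ConvexOn ℝ (Icc c β) (meridianSum β) :=
    (((convexOn_id (convex_Icc c β)).add_const (π / 2 - β)).add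
      (harcsin.smul zero_le_two)).congr fun x hx => by
        rw [meridianSum_eq_of_le (by linarith) (hc.1.trans hx.1) hx.2]
        simp only [Pi.add_apply, id, smul_eq_mul, hq_def]
        ring
  calc meridianSum β θ ≤ max (meridianSum β c) (meridianSum β β) :=
        hconvex.le_max_of_mem_Icc ⟨le_rfl, hc.2.trans hθ⟩ ⟨hc.2.trans hθ, le_rfl⟩ ⟨hc.2, hθ⟩
    _ ≤ max (meridianSum β 0) (meridianSum β β) :=
        max_le_max_right _ (meridianSum_le_meridianSum_zero hβ hc.1 (hc.2.trans hθ) hqc.ge)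

lemma meridianSum_le_meridianSum_pi_sub (hβ : β ∈ Icc 0 (π / 2)) (h₀ : π / 2 ≤ θ) (h₁ : θ ≤ π) :
    meridianSum β θ ≤ meridianSum β (π - θ) := by
  have hcosβ : 0 ≤ cos β :=
    cos_nonneg_of_neg_pi_div_two_le_of_le (by linarith [hβ.1, pi_pos]) hβ.2
  have hcosθ : cos θ ≤ -cos θ := by
    linarith [cos_nonpos_of_pi_div_two_le_of_le h₀ (by linarith [pi_pos])]
  simp only [meridianSum, cos_sub _ β, cos_pi_sub, sin_pi_sub]
  gcongr

lemma meridianSum_le_max (hβ : β ∈ Icc 0 (π / 2)) (hθ : θ ∈ Icc 0 π) :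
    meridianSum β θ ≤ max (meridianSum β 0) (meridianSum β β) := by
  wlog h : θ ≤ π / 2 generalizing θ
  · exact (meridianSum_le_meridianSum_pi_sub hβ (not_le.1 h).le hθ.2).trans
      (this ⟨sub_nonneg.2 hθ.2, sub_le_self _ hθ.1⟩ (by linarith))
  rcases le_total β θ with hβθ | hθβ
  · exact le_max_of_le_right (meridianSum_le_meridianSum_self hβ.1 hβθ h)
  rcases le_or_gt 0 (cos β * cos θ - sin β * sin θ / 2) with hq | hq
  · exact le_max_of_le_left (meridianSum_le_meridianSum_zero hβ.2 hθ.1 hθβ hq)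
  · exact meridianSum_le_max_of_neg hβ.2 hθ.1 hθβ hq

end Meridian

section Triangle

lemma cos_two_pi_div_three : cos (2 * π / 3) = -1 / 2 := by
  rw [show 2 * π / 3 = π - π / 3 by ring, cos_pi_sub, cos_pi_div_three]
  ring

lemma sin_two_pi_div_three : sin (2 * π / 3) = √3 / 2 := by
  rw [show 2 * π / 3 = π - π / 3 by ring, sin_pi_sub, sin_pi_div_three]

variable {E : Type*} [NormedAddCommGroup E] [InnerProductSpace ℝ E] {N u v : E} {β : ℝ}

/-- The vertices of the equilateral spherical triangle with circumcenter `N` and circumradius `β`,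
in the frame `N, u, v`; the vertex `0` lies on the great circle through `N` and `u`. -/
noncomputable def equilateralTriangle (N u v : E) (β : ℝ) (ℓ : Fin 3) : E :=
  cos β • N + (sin β * cos (2 * π * ℓ / 3)) • u + (sin β * sin (2 * π * ℓ / 3)) • v

lemma inner_equilateralTriangle_zero (e : E) :
    ⟪equilateralTriangle N u v β 0, e⟫ = cos β * ⟪N, e⟫ + sin β * ⟪u, e⟫ := by
  simp [equilateralTriangle, inner_add_left, real_inner_smul_left]

lemma inner_equilateralTriangle_one (e : E) :
    ⟪equilateralTriangle N u v β 1, e⟫ =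
      cos β * ⟪N, e⟫ + sin β * (-1 / 2 * ⟪u, e⟫ + √3 / 2 * ⟪v, e⟫) := by
  simp only [equilateralTriangle, Fin.val_one, Nat.cast_one, mul_one, cos_two_pi_div_three,
    sin_two_pi_div_three, inner_add_left, real_inner_smul_left]
  ring

lemma inner_equilateralTriangle_two (e : E) :
    ⟪equilateralTriangle N u v β 2, e⟫ =
      cos β * ⟪N, e⟫ + sin β * (-1 / 2 * ⟪u, e⟫ - √3 / 2 * ⟪v, e⟫) := by
  have hangle : 2 * π * ((2 : Fin 3) : ℕ) / 3 = 2 * π - 2 * π / 3 := by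
    rw [Fin.val_two]
    push_cast
    ring
  simp only [equilateralTriangle, hangle, cos_two_pi_sub, sin_two_pi_sub, cos_two_pi_div_three,
    sin_two_pi_div_three, inner_add_left, real_inner_smul_left]
  ring

lemma sum_inner_equilateralTriangle (e : E) :
    ∑ ℓ, ⟪equilateralTriangle N u v β ℓ, e⟫ = 3 * cos β * ⟪N, e⟫ := by
  rw [Fin.sum_univ_three, inner_equilateralTriangle_zero, inner_equilateralTriangle_one,
    inner_equilateralTriangle_two]
  ring

lemma sum_inner_equilateralTriangle_sq (e : E) :
    ∑ ℓ, ⟪equilateralTriangle N u v β ℓ, e⟫ ^ 2 =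
      3 * (cos β * ⟪N, e⟫) ^ 2 + 3 / 2 * sin β ^ 2 * (⟪u, e⟫ ^ 2 + ⟪v, e⟫ ^ 2) := by
  rw [Fin.sum_univ_three, inner_equilateralTriangle_zero, inner_equilateralTriangle_one,
    inner_equilateralTriangle_two]
  linear_combination sin β ^ 2 * ⟪v, e⟫ ^ 2 / 2 * sq_sqrt (zero_le_three (α := ℝ))

/-- The first two moments of the three inner products only depend on `⟪N, e⟫`, so they do not
change when `e` is rotated about `N` onto the meridian through the vertex `0`. -/
lemma sum_arcsin_inner_equilateralTriangle_le (hβ : β ∈ Icc 0 π) {e : E}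
    (he : ⟪N, e⟫ ^ 2 + ⟪u, e⟫ ^ 2 + ⟪v, e⟫ ^ 2 = 1) :
    ∑ ℓ, arcsin ⟪equilateralTriangle N u v β ℓ, e⟫ ≤ meridianSum β (arccos ⟪N, e⟫) := by
  have hcos : cos (arccos ⟪N, e⟫) = ⟪N, e⟫ := cos_arccos (by nlinarith) (by nlinarith)
  have hsin : 0 ≤ sin (arccos ⟪N, e⟫) := sin_nonneg_of_mem_Icc ⟨arccos_nonneg _, arccos_le_pi _⟩
  have hsum := sum_inner_equilateralTriangle (N := N) (u := u) (v := v) (β := β) e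
  have hsq := sum_inner_equilateralTriangle_sq (N := N) (u := u) (v := v) (β := β) e
  rw [Fin.sum_univ_three] at hsum hsq ⊢
  set θ := arccos ⟪N, e⟫
  have huv : ⟪u, e⟫ ^ 2 + ⟪v, e⟫ ^ 2 = sin θ ^ 2 := by
    rw [sin_sq, hcos]
    linarith
  rw [← hcos] at hsum hsq
  rw [huv] at hsq
  refine arcsin_add_add_le_of_sum_of_sum_sq ?_ (cos_le_one _) ?_ ?_ ?_
  · rw [cos_sub]
    nlinarith [mul_nonneg (sin_nonneg_of_mem_Icc hβ) hsin]
  · calc -1 ≤ cos (θ + β) := neg_one_le_cos _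
      _ = _ := by rw [cos_sub, cos_add]; ring
  · rw [hsum, cos_sub]
    ring
  · rw [hsq, cos_sub]
    ring

lemma inner_sq_add_inner_sq_add_inner_sq_eq_one (h : Orthonormal ℝ ![N, u, v])
    (hE : Module.finrank ℝ E = 3) {e : E} (he : ‖e‖ = 1) :
    ⟪N, e⟫ ^ 2 + ⟪u, e⟫ ^ 2 + ⟪v, e⟫ ^ 2 = 1 := by
  have : FiniteDimensional ℝ E := .of_finrank_pos (by simp [hE])
  let b := (basisOfOrthonormalOfCardEqFinrank h (by simp [hE])).toOrthonormalBasis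
    (by simpa using h)
  have hb : ⇑b = ![N, u, v] := by simp [b]
  simpa [hb, Fin.sum_univ_three, he] using b.sum_sq_norm_inner_right e

lemma norm_cos_smul_add_sin_smul (hN : ‖N‖ = 1) (hu : ‖u‖ = 1) (hNu : ⟪N, u⟫ = 0) (θ : ℝ) :
    ‖cos θ • N + sin θ • u‖ = 1 := by
  rw [← sq_eq_sq₀ (norm_nonneg _) zero_le_one, norm_add_sq_real, real_inner_smul_left,
    real_inner_smul_right, hNu, norm_smul, norm_smul, hN, hu]
  simp

lemma sum_arcsin_inner_equilateralTriangle_meridian (h : Orthonormal ℝ ![N, u, v]) (θ : ℝ) :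
    ∑ ℓ, arcsin ⟪equilateralTriangle N u v β ℓ, cos θ • N + sin θ • u⟫ = meridianSum β θ := by
  have hNu : ⟪N, u⟫ = 0 := h.inner_eq_zero (i := 0) (j := 1) (by decide)
  have hNv : ⟪N, v⟫ = 0 := h.inner_eq_zero (i := 0) (j := 2) (by decide)
  have huv : ⟪u, v⟫ = 0 := h.inner_eq_zero (i := 1) (j := 2) (by decide)
  have hNe : ⟪N, cos θ • N + sin θ • u⟫ = cos θ := by
    simp [inner_add_right, real_inner_smul_right, hNu, show ‖N‖ = 1 from h.norm_eq_one 0]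
  have hue : ⟪u, cos θ • N + sin θ • u⟫ = sin θ := by
    simp [inner_add_right, real_inner_smul_right, real_inner_comm, hNu,
      show ‖u‖ = 1 from h.norm_eq_one 1]
  have hve : ⟪v, cos θ • N + sin θ • u⟫ = 0 := by
    simp [inner_add_right, real_inner_smul_right, real_inner_comm, hNv, huv]
  rw [Fin.sum_univ_three, inner_equilateralTriangle_zero, inner_equilateralTriangle_one,
    inner_equilateralTriangle_two, hNe, hue, hve, meridianSum, cos_sub]
  ring_nf

lemma tcVertex3_equilateralTriangle {N u v : EuclideanSpace ℝ (Fin 3)}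
    (h : Orthonormal ℝ ![N, u, v]) (hβ : β ∈ Icc 0 (π / 2)) :
    tcVertex3 (equilateralTriangle N u v β) = max (meridianSum β 0) (meridianSum β β) := by
  simp only [tcVertex3, ← arcsin_eq_pi_div_two_sub_arccos]
  have hmeridian (θ : ℝ) : ∃ e : EuclideanSpace ℝ (Fin 3), ‖e‖ = 1 ∧
      meridianSum β θ = ∑ ℓ, arcsin ⟪equilateralTriangle N u v β ℓ, e⟫ :=
    ⟨_, norm_cos_smul_add_sin_smul (h.norm_eq_one 0) (h.norm_eq_one 1)
      (h.inner_eq_zero (i := 0) (j := 1) (by decide)) θ,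
      (sum_arcsin_inner_equilateralTriangle_meridian h θ).symm⟩
  refine IsGreatest.csSup_eq ⟨?_, ?_⟩
  · rcases max_choice (meridianSum β 0) (meridianSum β β) with hmax | hmax <;> rw [hmax]
    exacts [hmeridian 0, hmeridian β]
  · rintro _ ⟨e, he, rfl⟩
    calc ∑ ℓ, arcsin ⟪equilateralTriangle N u v β ℓ, e⟫ ≤ meridianSum β (arccos ⟪N, e⟫) :=
          sum_arcsin_inner_equilateralTriangle_le ⟨hβ.1, by linarith [hβ.2, pi_pos]⟩
            (inner_sq_add_inner_sq_add_inner_sq_eq_one h (by simp) he)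
      _ ≤ _ := meridianSum_le_max hβ ⟨arccos_nonneg _, arccos_le_pi _⟩

end Triangle

section CriticalRadius

variable {R β : ℝ}

lemma concaveOn_four_mul_arcsin_sub_three_mul :
    ConcaveOn ℝ (Icc 0 π) fun x => 4 * arcsin (√3 / 2 * sin x) - 3 * x := by
  have hk : √3 / 2 < 1 := by
    rw [div_lt_one two_pos, sqrt_lt' two_pos]
    norm_num
  exact ((concaveOn_arcsin_mul_sin (by positivity) hk).smul (by norm_num : (0 : ℝ) ≤ 4)).sub
    ((convexOn_id (convex_Icc 0 π)).smul (by norm_num : (0 : ℝ) ≤ 3))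

lemma meridianSum_self_le_meridianSum_zero (hβ : 0 ≤ β) (hβR : β ≤ R) (hR : R ≤ π)
    (hRcrit : 3 * R = 4 * arcsin (√3 / 2 * sin R)) : meridianSum β β ≤ meridianSum β 0 := by
  have h := concaveOn_four_mul_arcsin_sub_three_mul.min_le_of_mem_Icc
    ⟨le_rfl, pi_pos.le⟩ ⟨hβ.trans hβR, hR⟩ ⟨hβ, hβR⟩
  rw [meridianSum_self ⟨hβ, hβR.trans hR⟩, meridianSum_zero ⟨hβ, hβR.trans hR⟩]
  simp only [sin_zero, mul_zero, arcsin_zero, ← hRcrit, sub_self, min_self] at h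
  linarith

lemma meridianSum_zero_le_meridianSum_self (hR : 0 < R) (hRβ : R ≤ β) (hβ : β ≤ π)
    (hRcrit : 3 * R = 4 * arcsin (√3 / 2 * sin R)) : meridianSum β 0 ≤ meridianSum β β := by
  have hβmem : β ∈ Icc 0 π := ⟨hR.le.trans hRβ, hβ⟩
  have h := concaveOn_four_mul_arcsin_sub_three_mul.right_le_of_le_left''
    ⟨le_rfl, pi_pos.le⟩ hβmem hR hRβ (by simp [← hRcrit])
  rw [meridianSum_self hβmem, meridianSum_zero hβmem]
  simp only [← hRcrit, sub_self] at h
  linarith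

end CriticalRadius

/-- For three unit vectors `T₁, T₂, T₃` forming an equilateral spherical triangle
with circumcenter `N` and circumradius `β ∈ [0, π/2]`:
`tc = 3(π/2 − β)` if `β ≤ R₀`, and `tc = 3π/2 − 4 arcsin((√3/2) sin β)` if
`β ≥ R₀`, where `R₀` is the unique value in `(0, π/2)` with
`3R₀ = 4 arcsin((√3/2) sin R₀)`. -/
theorem tcVertex3_equilateral (N u v : EuclideanSpace ℝ (Fin 3))
    (hN : ‖N‖ = 1) (hu : ‖u‖ = 1) (hv : ‖v‖ = 1)
    (hNu : ⟪N, u⟫ = 0) (hNv : ⟪N, v⟫ = 0) (huv : ⟪u, v⟫ = 0)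
    (β : ℝ) (hβ : 0 ≤ β) (hβ' : β ≤ π / 2)
    (T : Fin 3 → EuclideanSpace ℝ (Fin 3))
    (hT : ∀ ℓ : Fin 3, T ℓ = Real.cos β • N +
      (Real.sin β * Real.cos (2 * π * ℓ / 3)) • u +
      (Real.sin β * Real.sin (2 * π * ℓ / 3)) • v)
    (R₀ : ℝ) (hR₀ : R₀ ∈ Set.Ioo 0 (π / 2))
    (hR₀eq : 3 * R₀ = 4 * Real.arcsin (Real.sqrt 3 / 2 * Real.sin R₀))
    (hR₀uniq : ∀ x ∈ Set.Ioo 0 (π / 2),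
      3 * x = 4 * Real.arcsin (Real.sqrt 3 / 2 * Real.sin x) → x = R₀) :
    (β ≤ R₀ → tcVertex3 T = 3 * (π / 2 - β)) ∧
    (R₀ ≤ β → tcVertex3 T = 3 * π / 2 - 4 * Real.arcsin (Real.sqrt 3 / 2 * Real.sin β)) := by
  obtain rfl : T = equilateralTriangle N u v β := funext hT
  have hframe : Orthonormal ℝ ![N, u, v] := by
    simp [orthonormal_vecCons_iff, Fin.forall_fin_two, hN, hu, hv, hNu, hNv, huv]
  have hβπ : β ≤ π := by linarith [pi_pos]
  rw [tcVertex3_equilateralTriangle hframe ⟨hβ, hβ'⟩]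
  constructor
  · intro hβR
    have hR₀π : R₀ ≤ π := by linarith [hR₀.2, pi_pos]
    rw [max_eq_left (meridianSum_self_le_meridianSum_zero hβ hβR hR₀π hR₀eq),
      meridianSum_zero ⟨hβ, hβπ⟩]
  · intro hRβ
    rw [max_eq_right (meridianSum_zero_le_meridianSum_self hR₀.1 hRβ hβπ hR₀eq),
      meridianSum_self ⟨hβ, hβπ⟩]
end

section
/- Let Γ ⊂ ℝ³ be an embedded graph with exactly two vertices q⁺, q⁻ and three edges a₁, a₂, a₃, each a C² arc joining q⁺ to q⁻ (C¹ up to endpoints). Then the total curvature tc(Γ) := Σℓ ∫_{aℓ}|k⃗| ds + tc(q⁺) + tc(q⁻) satisfies tc(Γ) ≥ 3π, where tc(q^±) := sup_{e∈S²} Σℓ (π/2 − β_ℓ^±(e)) and β_ℓ^±(e) is the angle between e and the unit tangent vector of aℓ at q^± (pointing into aℓ). -/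
open Real RealInnerProductSpace intervalIntegral

/-!
Fix an arc with unit tangent `T`, let `u` be a unit vector with `q⁻ - q⁺` a nonnegative multiple of
`u`, and let `α`, `α'` be the angles between `u` and the initial and final values of `T`.
The arc has total curvature at least `α + α'`.  Otherwise, closing up the spherical curve `T` by
geodesics from its ends to `-u` gives a loop of length less than `2π`, and such a loop lies in the
open hemisphere centred at the midpoint of two points cutting it into halves, here `-u` and some
`T s`.  So the arc moves strictly in the direction `T s - u`; but `⟪T s - u, q⁻ - q⁺⟫` is a
nonnegative multiple of `⟪T s, u⟫ - 1 ≤ 0`.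

Testing the suprema at the two vertices on `e = u` and `e = -u` bounds the vertex contributions
below by `∑ (π / 2 - α)` and `∑ (π / 2 - α')`, and the angles cancel.
-/

section

open InnerProductGeometry Set MeasureTheory Filter Topology

variable {E : Type*} [NormedAddCommGroup E] [InnerProductSpace ℝ E]

lemma inner_add_left_pos_of_angle_add_angle_lt_pi {p q x : E} (hpq : ‖p‖ = ‖q‖)
    (h : angle p x + angle q x < π) : 0 < ⟪p + q, x⟫ := by
  have hx : x ≠ 0 := by
    rintro rfl
    simp at h
  have hp : p ≠ 0 := by
    rintro rfl
    have hq : q = 0 := norm_eq_zero.1 (by rw [← hpq, norm_zero])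
    simp [hq] at h
  have hcos : 0 < cos (angle p x) + cos (angle q x) := by
    have := cos_lt_cos_of_nonneg_of_le_pi (angle_nonneg p x)
      (sub_le_self π (angle_nonneg q x)) (by linarith)
    rw [cos_pi_sub] at this
    linarith
  calc 0 < (cos (angle p x) + cos (angle q x)) * (‖p‖ * ‖x‖) :=
        mul_pos hcos (mul_pos (norm_pos_iff.2 hp) (norm_pos_iff.2 hx))
    _ = ⟪p + q, x⟫ := by
        rw [inner_add_left, ← cos_angle_mul_norm_mul_norm p x, ← cos_angle_mul_norm_mul_norm q x,
          ← hpq, add_mul]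

lemma abs_inner_le_sqrt_mul_norm_of_inner_eq_zero {z y v : E} (hz : ‖z‖ ≤ 1) (hy : ‖y‖ = 1)
    (hyv : ⟪y, v⟫ = 0) : |⟪z, v⟫| ≤ √(1 - ⟪z, y⟫ ^ 2) * ‖v‖ := by
  set w := z - ⟪z, y⟫ • y with hw
  have hwv : ⟪z, v⟫ = ⟪w, v⟫ := by
    rw [hw, inner_sub_left, real_inner_smul_left, hyv, mul_zero, sub_zero]
  have hw_sq : ‖w‖ ^ 2 = ‖z‖ ^ 2 - ⟪z, y⟫ ^ 2 := by
    rw [hw, norm_sub_sq_real, real_inner_smul_right, norm_smul, hy, norm_eq_abs, mul_one, sq_abs]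
    ring
  have hw_le : ‖w‖ ≤ √(1 - ⟪z, y⟫ ^ 2) := by
    apply le_sqrt_of_sq_le
    rw [hw_sq]
    gcongr
    exact pow_le_one₀ (norm_nonneg z) hz
  calc |⟪z, v⟫| = |⟪w, v⟫| := by rw [hwv]
    _ ≤ ‖w‖ * ‖v‖ := abs_real_inner_le_norm w v
    _ ≤ √(1 - ⟪z, y⟫ ^ 2) * ‖v‖ := by gcongr

lemma exists_norm_eq_one_and_norm_smul_eq [Nontrivial E] (v : E) :
    ∃ u : E, ‖u‖ = 1 ∧ ‖v‖ • u = v := by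
  rcases eq_or_ne v 0 with rfl | hv
  · obtain ⟨u, hu⟩ := exists_norm_eq E zero_le_one
    exact ⟨u, hu, by simp⟩
  · exact ⟨NormedSpace.normalize v, NormedSpace.norm_normalize hv,
      NormedSpace.norm_smul_normalize v⟩

/-- `T` is a curve on the unit sphere, parametrized by `[a, b]`, with velocity `T'` on `(a, b)` only
and of finite length.  For the unit tangent of an arc in arclength parametrization,
this length is the total curvature of the arc. -/
structure IsSphericalCurve (T T' : ℝ → E) (a b : ℝ) : Prop where
  continuousOn : ContinuousOn T (Icc a b)
  hasDerivAt : ∀ t ∈ Ioo a b, HasDerivAt T (T' t) t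
  norm_eq_one : ∀ t ∈ Icc a b, ‖T t‖ = 1
  intervalIntegrable : IntervalIntegrable (fun t ↦ ‖T' t‖) volume a b

namespace IsSphericalCurve

variable {T T' : ℝ → E} {a b : ℝ}

lemma mono (hT : IsSphericalCurve T T' a b) {c d : ℝ} (hac : a ≤ c) (hcd : c ≤ d) (hdb : d ≤ b) :
    IsSphericalCurve T T' c d where
  continuousOn := hT.continuousOn.mono (Icc_subset_Icc hac hdb)
  hasDerivAt t ht := hT.hasDerivAt t (Ioo_subset_Ioo hac hdb ht)
  norm_eq_one t ht := hT.norm_eq_one t (Icc_subset_Icc hac hdb ht)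
  intervalIntegrable := hT.intervalIntegrable.mono_set <| by
    rw [uIcc_of_le hcd, uIcc_of_le (hac.trans (hcd.trans hdb))]
    exact Icc_subset_Icc hac hdb

lemma inner_deriv_eq_zero (hT : IsSphericalCurve T T' a b) {t : ℝ} (ht : t ∈ Ioo a b) :
    ⟪T t, T' t⟫ = 0 := by
  have hconst : (fun s ↦ ‖T s‖ ^ 2) =ᶠ[𝓝 t] fun _ ↦ 1 := by
    filter_upwards [Icc_mem_nhds ht.1 ht.2] with s hs
    rw [hT.norm_eq_one s hs, one_pow]
  have := (hT.hasDerivAt t ht).norm_sq.unique ((hasDerivAt_const t 1).congr_of_eventuallyEq hconst)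
  linarith

lemma abs_arccos_inner_sub_le_integral (hT : IsSphericalCurve T T' a b) (hab : a ≤ b) {z : E}
    (hz : ‖z‖ < 1) :
    |arccos ⟪z, T b⟫ - arccos ⟪z, T a⟫| ≤ ∫ t in a..b, ‖T' t‖ := by
  have hlt : ∀ t ∈ Ioo a b, |⟪z, T t⟫| < 1 := fun t ht ↦ calc
    |⟪z, T t⟫| ≤ ‖z‖ * ‖T t‖ := abs_real_inner_le_norm z (T t)
    _ < 1 := by rwa [hT.norm_eq_one t (Ioo_subset_Icc_self ht), mul_one]
  have hderiv : ∀ t ∈ Ioo a b, HasDerivAt (fun s ↦ arccos ⟪z, T s⟫)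
      (-(1 / √(1 - ⟪z, T t⟫ ^ 2)) * ⟪z, T' t⟫) t := by
    intro t ht
    have hinner : HasDerivAt (fun s ↦ ⟪z, T s⟫) ⟪z, T' t⟫ t := by
      simpa using (hasDerivAt_const t z).inner ℝ (hT.hasDerivAt t ht)
    obtain ⟨hgt_neg_one, hlt_one⟩ := abs_lt.1 (hlt t ht)
    exact HasDerivAt.comp (h₂ := arccos) t (hasDerivAt_arccos hgt_neg_one.ne' hlt_one.ne) hinner
  have hcont : ContinuousOn (fun s ↦ arccos ⟪z, T s⟫) (Icc a b) :=
    continuous_arccos.comp_continuousOn (continuousOn_const.inner hT.continuousOn)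
  refine norm_sub_le_integral_of_norm_deriv_le_of_le hab hcont
    (fun t ht ↦ (hderiv t ht).differentiableAt.differentiableWithinAt)
    (Eventually.of_forall fun t ht ↦ ?_) hT.intervalIntegrable
  have hpos : 0 < √(1 - ⟪z, T t⟫ ^ 2) :=
    sqrt_pos.2 (sub_pos.2 ((sq_lt_one_iff_abs_lt_one _).2 (hlt t ht)))
  rw [(hderiv t ht).deriv, norm_mul, norm_neg, norm_div, norm_one, norm_of_nonneg hpos.le,
    norm_eq_abs, one_div, inv_mul_le_iff₀ hpos]
  exact abs_inner_le_sqrt_mul_norm_of_inner_eq_zero hz.le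
    (hT.norm_eq_one t (Ioo_subset_Icc_self ht)) (hT.inner_deriv_eq_zero ht)

-- The angle itself is not differentiable where it is `0` or `π`; shrinking `x` to `r • x` with
-- `r < 1` keeps the argument of `arccos` inside `(-1, 1)`.
lemma abs_angle_sub_angle_le_integral (hT : IsSphericalCurve T T' a b) (hab : a ≤ b) {x : E}
    (hx : ‖x‖ = 1) :
    |angle x (T b) - angle x (T a)| ≤ ∫ t in a..b, ‖T' t‖ := by
  have hlim : Tendsto (fun r : ℝ ↦ |arccos ⟪r • x, T b⟫ - arccos ⟪r • x, T a⟫|) (𝓝[<] 1)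
      (𝓝 |angle x (T b) - angle x (T a)|) := by
    have hcont : Continuous fun r : ℝ ↦ |arccos ⟪r • x, T b⟫ - arccos ⟪r • x, T a⟫| := by
      fun_prop
    have h := (hcont.tendsto 1).mono_left (nhdsWithin_le_nhds (s := Iio 1))
    simpa only [angle, hx, hT.norm_eq_one a (left_mem_Icc.2 hab),
      hT.norm_eq_one b (right_mem_Icc.2 hab), one_smul, mul_one, div_one] using h
  refine le_of_tendsto hlim ?_
  filter_upwards [Ioo_mem_nhdsLT zero_lt_one] with r hr
  apply hT.abs_arccos_inner_sub_le_integral hab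
  rw [norm_smul, hx, mul_one, norm_of_nonneg hr.1.le]
  exact hr.2

lemma angle_le_integral (hT : IsSphericalCurve T T' a b) (hab : a ≤ b) :
    angle (T a) (T b) ≤ ∫ t in a..b, ‖T' t‖ := by
  have ha := hT.norm_eq_one a (left_mem_Icc.2 hab)
  have h := hT.abs_angle_sub_angle_le_integral hab ha
  rw [angle_self (norm_ne_zero_iff.1 (by simp [ha])), sub_zero] at h
  exact (le_abs_self _).trans h

lemma exists_angle_add_integral_eq (hT : IsSphericalCurve T T' a b) (hab : a ≤ b) {p : E}
    (hp : ‖p‖ = 1) :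
    ∃ s ∈ Icc a b,
      angle p (T a) + (∫ t in a..s, ‖T' t‖) = angle p (T b) + ∫ t in s..b, ‖T' t‖ := by
  set K := ∫ t in a..b, ‖T' t‖
  have hcont : ContinuousOn (fun s ↦ ∫ t in a..s, ‖T' t‖) (Icc a b) := by
    simpa only [uIcc_of_le hab] using
      intervalIntegral.continuousOn_primitive_interval' hT.intervalIntegrable left_mem_uIcc
  obtain ⟨hlower, hupper⟩ := abs_le.1 (hT.abs_angle_sub_angle_le_integral hab hp)
  obtain ⟨s, hs, hs_eq⟩ := intermediate_value_Icc hab hcont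
    (show (K + angle p (T b) - angle p (T a)) / 2 ∈ _ by
      rw [intervalIntegral.integral_same]
      constructor <;> linarith)
  have hsplit : (∫ t in a..s, ‖T' t‖) + ∫ t in s..b, ‖T' t‖ = K :=
    intervalIntegral.integral_add_adjacent_intervals
      (hT.mono le_rfl hs.1 hs.2).intervalIntegrable (hT.mono hs.1 hs.2 le_rfl).intervalIntegrable
  exact ⟨s, hs, by dsimp only at hs_eq; linarith⟩

lemma exists_forall_inner_add_pos (hT : IsSphericalCurve T T' a b) (hab : a ≤ b) {p : E}
    (hp : ‖p‖ = 1)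
    (hlength : angle p (T a) + (∫ t in a..b, ‖T' t‖) + angle p (T b) < 2 * π) :
    ∃ s ∈ Icc a b, ∀ t ∈ Icc a b, 0 < ⟪p + T s, T t⟫ := by
  obtain ⟨s, hs, hhalf⟩ := hT.exists_angle_add_integral_eq hab hp
  have hadd {c d e : ℝ} (hac : a ≤ c) (hcd : c ≤ d) (hde : d ≤ e) (heb : e ≤ b) :
      (∫ t in c..d, ‖T' t‖) + ∫ t in d..e, ‖T' t‖ = ∫ t in c..e, ‖T' t‖ :=
    intervalIntegral.integral_add_adjacent_intervals
      (hT.mono hac hcd (hde.trans heb)).intervalIntegrable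
      (hT.mono (hac.trans hcd) hde heb).intervalIntegrable
  have hsplit := hadd le_rfl hs.1 hs.2 le_rfl
  refine ⟨s, hs, fun t ht ↦ inner_add_left_pos_of_angle_add_angle_lt_pi
    (hp.trans (hT.norm_eq_one s hs).symm) ?_⟩
  rcases le_total t s with hts | hst
  · have hpt := abs_le.1 ((hT.mono le_rfl ht.1 ht.2).abs_angle_sub_angle_le_integral ht.1 hp)
    have hst_le := (hT.mono ht.1 hts hs.2).angle_le_integral hts
    rw [angle_comm] at hst_le
    linarith [hadd le_rfl ht.1 hts hs.2]
  · have hpt := abs_le.1 ((hT.mono ht.1 ht.2 le_rfl).abs_angle_sub_angle_le_integral ht.2 hp)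
    have hst_le := (hT.mono hs.1 hst ht.2).angle_le_integral hst
    linarith [hadd hs.1 hst ht.2 le_rfl]

theorem angle_add_angle_le_integral (hT : IsSphericalCurve T T' a b) (hab : a < b) {γ : ℝ → E}
    (hγ : ContinuousOn γ (Icc a b)) (hγT : ∀ t ∈ Ioo a b, HasDerivAt γ (T t) t) {u : E}
    (hu : ‖u‖ = 1) {c : ℝ} (hc : 0 ≤ c) (hchord : γ b - γ a = c • u) :
    angle u (T a) + angle u (T b) ≤ ∫ t in a..b, ‖T' t‖ := by
  by_contra! hlt
  have hlength : angle (-u) (T a) + (∫ t in a..b, ‖T' t‖) + angle (-u) (T b) < 2 * π := by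
    rw [angle_neg_left, angle_neg_left]
    linarith
  obtain ⟨s, hs, hpos⟩ := hT.exists_forall_inner_add_pos hab.le ((norm_neg u).trans hu) hlength
  have hmono : StrictMonoOn (fun t ↦ ⟪-u + T s, γ t⟫) (Icc a b) := by
    refine strictMonoOn_of_hasDerivWithinAt_pos (f' := fun t ↦ ⟪-u + T s, T t⟫) (convex_Icc a b)
      (continuousOn_const.inner hγ) (fun t ht ↦ ?_) fun t ht ↦ hpos t (interior_subset ht)
    rw [interior_Icc] at ht ⊢
    simpa using ((hasDerivAt_const t (-u + T s)).inner ℝ (hγT t ht)).hasDerivWithinAt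
  have hchord_pos : 0 < ⟪-u + T s, γ b - γ a⟫ := by
    rw [inner_sub_right]
    exact sub_pos.2 (hmono (left_mem_Icc.2 hab.le) (right_mem_Icc.2 hab.le) hab)
  refine hchord_pos.not_ge ?_
  rw [hchord, real_inner_smul_right, inner_add_left, inner_neg_left,
    inner_self_eq_one_of_norm_eq_one hu]
  exact mul_nonpos_of_nonneg_of_nonpos hc
    (by linarith [real_inner_le_one_of_norm_eq_one (hT.norm_eq_one s hs) hu])

end IsSphericalCurve

/-- The contribution `tc(q)` of a vertex `q` to the total curvature of a graph whose edges leave `q`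
in the directions of the unit vectors `v ℓ`; `arccos ⟪v ℓ, e⟫` is then the angle between `v ℓ` and
`e`. -/
noncomputable def vertexCurvature {ι : Type*} [Fintype ι] (v : ι → E) : ℝ :=
  sSup {s : ℝ | ∃ e : E, ‖e‖ = 1 ∧ s = ∑ ℓ, (π / 2 - arccos ⟪v ℓ, e⟫)}

lemma sum_le_vertexCurvature {ι : Type*} [Fintype ι] (v : ι → E) {e : E} (he : ‖e‖ = 1) :
    ∑ ℓ, (π / 2 - arccos ⟪v ℓ, e⟫) ≤ vertexCurvature v := by
  refine le_csSup ⟨∑ _ℓ : ι, π / 2, ?_⟩ ⟨e, he, rfl⟩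
  rintro _ ⟨e', -, rfl⟩
  exact Finset.sum_le_sum fun ℓ _ ↦ sub_le_self _ (arccos_nonneg _)

theorem theta_graph_total_curvature_ge_three_pi_general [Nontrivial E] {ι : Type*} [Fintype ι]
    {qp qm : E} {L : ι → ℝ} (hL : ∀ ℓ, 0 < L ℓ) {γ γ' γ'' : ι → ℝ → E}
    (hγ : ∀ ℓ, ContinuousOn (γ ℓ) (Icc 0 (L ℓ)))
    (hderiv : ∀ ℓ, ∀ t ∈ Ioo 0 (L ℓ), HasDerivAt (γ ℓ) (γ' ℓ t) t)
    (htangent : ∀ ℓ, IsSphericalCurve (γ' ℓ) (γ'' ℓ) 0 (L ℓ))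
    (h0 : ∀ ℓ, γ ℓ 0 = qp) (hend : ∀ ℓ, γ ℓ (L ℓ) = qm) :
    Fintype.card ι * π ≤ (∑ ℓ, ∫ t in (0 : ℝ)..(L ℓ), ‖γ'' ℓ t‖) +
      vertexCurvature (fun ℓ ↦ γ' ℓ 0) + vertexCurvature (fun ℓ ↦ -γ' ℓ (L ℓ)) := by
  obtain ⟨u, hu, hchord⟩ := exists_norm_eq_one_and_norm_smul_eq (qm - qp)
  have harc (ℓ : ι) : arccos ⟪γ' ℓ 0, u⟫ + arccos ⟪-γ' ℓ (L ℓ), -u⟫ ≤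
      ∫ t in (0 : ℝ)..(L ℓ), ‖γ'' ℓ t‖ := by
    have h := (htangent ℓ).angle_add_angle_le_integral (hL ℓ) (hγ ℓ) (hderiv ℓ) hu
      (norm_nonneg (qm - qp)) (by rw [h0, hend, hchord])
    simpa only [angle, hu, (htangent ℓ).norm_eq_one 0 (left_mem_Icc.2 (hL ℓ).le),
      (htangent ℓ).norm_eq_one (L ℓ) (right_mem_Icc.2 (hL ℓ).le), mul_one, div_one, inner_neg_neg,
      real_inner_comm] using h
  calc Fintype.card ι * π
      = ∑ ℓ, ((arccos ⟪γ' ℓ 0, u⟫ + arccos ⟪-γ' ℓ (L ℓ), -u⟫) +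
          (π / 2 - arccos ⟪γ' ℓ 0, u⟫) + (π / 2 - arccos ⟪-γ' ℓ (L ℓ), -u⟫)) := by
        rw [← nsmul_eq_mul, ← Finset.card_univ, ← Finset.sum_const]
        exact Finset.sum_congr rfl fun ℓ _ ↦ by ring
    _ ≤ _ := by
        rw [Finset.sum_add_distrib, Finset.sum_add_distrib]
        gcongr with ℓ
        · exact harc ℓ
        · exact sum_le_vertexCurvature _ hu
        · exact sum_le_vertexCurvature _ ((norm_neg u).trans hu)

end

/-- **Total curvature of a theta-graph is at least `3π`.**
Let `Γ ⊂ ℝ³` be an embedded graph with exactly two vertices `q⁺ ≠ q⁻` and three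
edges: unit-speed `C²` arcs `γℓ : [0, Lℓ] → ℝ³` from `q⁺` to `q⁻`, each injective
on `[0, Lℓ]`, with pairwise disjoint interiors.  Writing
`tc(q^±) = sup_{‖e‖=1} Σℓ (π/2 − β_ℓ^±(e))` for the vertex contributions (where
`β_ℓ^±(e)` is the angle between `e` and the tangent vector of `aℓ` at `q^±`
pointing into the arc), the total curvature satisfies
`tc(Γ) = Σℓ ∫ ‖k⃗‖ ds + tc(q⁺) + tc(q⁻) ≥ 3π`. -/
theorem theta_graph_total_curvature_ge_three_pi
    (qp qm : EuclideanSpace ℝ (Fin 3)) (hq : qp ≠ qm)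
    (L : Fin 3 → ℝ) (hL : ∀ ℓ, 0 < L ℓ)
    (γ γ' γ'' : Fin 3 → ℝ → EuclideanSpace ℝ (Fin 3))
    (hderiv : ∀ ℓ t, HasDerivAt (γ ℓ) (γ' ℓ t) t)
    (hderiv' : ∀ ℓ t, HasDerivAt (γ' ℓ) (γ'' ℓ t) t)
    (hC2 : ∀ ℓ, Continuous (γ'' ℓ))
    (hspeed : ∀ ℓ t, ‖γ' ℓ t‖ = 1)
    (h0 : ∀ ℓ, γ ℓ 0 = qp) (hend : ∀ ℓ, γ ℓ (L ℓ) = qm)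
    (hinj : ∀ ℓ, Set.InjOn (γ ℓ) (Set.Icc 0 (L ℓ)))
    (hdisj : ∀ ℓ m, ℓ ≠ m →
      Disjoint (γ ℓ '' Set.Ioo 0 (L ℓ)) (γ m '' Set.Ioo 0 (L m))) :
    3 * π ≤
      (∑ ℓ, ∫ t in (0 : ℝ)..(L ℓ), ‖γ'' ℓ t‖) +
      sSup {s : ℝ | ∃ e : EuclideanSpace ℝ (Fin 3), ‖e‖ = 1 ∧
        s = ∑ ℓ, (π / 2 - Real.arccos ⟪γ' ℓ 0, e⟫)} +
      sSup {s : ℝ | ∃ e : EuclideanSpace ℝ (Fin 3), ‖e‖ = 1 ∧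
        s = ∑ ℓ, (π / 2 - Real.arccos ⟪-γ' ℓ (L ℓ), e⟫)} := by
  have hcard : (3 : ℝ) = Fintype.card (Fin 3) := by simp
  rw [hcard]
  exact theta_graph_total_curvature_ge_three_pi_general hL
    (fun ℓ t _ ↦ (hderiv ℓ t).continuousAt.continuousWithinAt) (fun ℓ t _ ↦ hderiv ℓ t)
    (fun ℓ ↦ ⟨fun t _ ↦ (hderiv' ℓ t).continuousAt.continuousWithinAt, fun t _ ↦ hderiv' ℓ t,
      fun t _ ↦ hspeed ℓ t, (hC2 ℓ).norm.intervalIntegrable _ _⟩) h0 hend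
end
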